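/- arXiv:0811.3530 — 2 statements merged into one kernel-verified Lean document; each statement's English description precedes it below -/
import Mathlib

section
/- Consider p coupled harmonic oscillators ẋ_i = y_i, ẏ_i = −x_i + Σ_{j=1}^p γ_ij(y_j − y_i), i = 1,…,p, whose stacked state z(t) ∈ ℝ^{2p} evolves as z(t) = exp(t(I_p ⊗ A₀ + Γ ⊗ E)) z(0) where A₀ = [[0,1],[−1,0]] and E = [[0,0],[0,1]]. If Γ = [γ_ij] ∈ ℝ^{p×p} is a connected interconnection and r ∈ ℝ^p satisfies rᵀΓ = 0 and rᵀ1 = 1, then |z(t) − (1rᵀ ⊗ exp(tA₀)) z(0)| → 0 as t → ∞; in particular the oscillators synchronize. -/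
open Matrix Filter Topology
open scoped Kronecker

/-- `Γ` is an interconnection: off-diagonal entries are nonnegative and each diagonal
entry is minus the sum of the other entries in its row (equivalently, rows sum to zero). -/
def IsInterconnection {p : ℕ} (Γ : Matrix (Fin p) (Fin p) ℝ) : Prop :=
  (∀ i j, i ≠ j → 0 ≤ Γ i j) ∧ ∀ i, ∑ j, Γ i j = 0

/-- `Γ` is a connected interconnection: it is an interconnection and its graph
(with an edge `(i, j)` whenever `Γ i j > 0`) has a node reachable by a directed
path from every other node. -/
def IsConnectedInterconnection {p : ℕ} (Γ : Matrix (Fin p) (Fin p) ℝ) : Prop :=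
  IsInterconnection Γ ∧
    ∃ k : Fin p, ∀ i : Fin p, Relation.ReflTransGen (fun a b => 0 < Γ a b) i k

lemma nexp_hasSum (𝕂 : Type*) [RCLike 𝕂] {R : Type*} [NormedRing R] [NormedAlgebra 𝕂 R]
    [FiniteDimensional 𝕂 R] (A : R) :
    HasSum (fun n : ℕ => ((n.factorial : 𝕂)⁻¹) • A ^ n) (NormedSpace.exp A) := by
  have : CompleteSpace R := FiniteDimensional.complete 𝕂 R
  exact NormedSpace.exp_series_hasSum_exp' (𝕂 := 𝕂) A

lemma mexp_hasSum {m : Type*} [Fintype m] [DecidableEq m] {𝕂 : Type*} [RCLike 𝕂] (A : Matrix m m 𝕂) :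
    HasSum (fun n : ℕ => ((n.factorial : 𝕂)⁻¹) • A ^ n) (NormedSpace.exp A) :=
  @nexp_hasSum 𝕂 _ (Matrix m m 𝕂) Matrix.linftyOpNormedRing Matrix.linftyOpNormedAlgebra
    (inferInstanceAs (FiniteDimensional 𝕂 (Matrix m m 𝕂))) A

lemma mexp_intertwine {m n : Type*} [Fintype m] [DecidableEq m] [Fintype n] [DecidableEq n]
    (A : Matrix m m ℝ) (B : Matrix n n ℝ) (X : Matrix m n ℝ) (h : A * X = X * B) :
    NormedSpace.exp A * X = X * NormedSpace.exp B := by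
  have hp : ∀ k : ℕ, A ^ k * X = X * B ^ k := by
    intro k
    induction k with
    | zero => simp
    | succ k ih => rw [pow_succ, Matrix.mul_assoc, h, ← Matrix.mul_assoc, ih, Matrix.mul_assoc, pow_succ]
  have h1 := (mexp_hasSum A).map (AddMonoidHom.mk' (fun M : Matrix m m ℝ => M * X)
    (fun a b => Matrix.add_mul a b X)) (by show Continuous (fun M : Matrix m m ℝ => M * X); fun_prop)
  have h2 := (mexp_hasSum B).map (AddMonoidHom.mk' (fun M : Matrix n n ℝ => X * M)
    (fun a b => Matrix.mul_add X a b)) (by show Continuous (fun M : Matrix n n ℝ => X * M); fun_prop)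
  refine h1.unique ?_
  refine Eq.mp ?_ h2
  congr 1
  funext k
  simp [hp]

lemma mexp_ofReal {m : Type*} [Fintype m] [DecidableEq m] (A : Matrix m m ℝ) :
    (NormedSpace.exp A).map Complex.ofReal = NormedSpace.exp (A.map Complex.ofReal) := by
  have h1 := (mexp_hasSum A).map (Complex.ofRealHom.mapMatrix (m := m)) (by
    show Continuous (fun M : Matrix m m ℝ => M.map Complex.ofReal)
    exact Continuous.matrix_map continuous_id Complex.continuous_ofReal)
  refine h1.unique ?_
  convert mexp_hasSum (A.map Complex.ofReal) using 1
  funext k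
  have : (A.map Complex.ofReal)^k = (A^k).map Complex.ofReal := by
    exact (map_pow (Complex.ofRealHom.mapMatrix (m := m)) A k).symm
  simp only [Function.comp, this]
  ext i j
  simp

lemma mexp_genEig {m : Type*} [Fintype m] [DecidableEq m] (A : Matrix m m ℂ) (μ : ℂ)
    (u : m → ℂ) (k : ℕ) (hk : (A - μ • 1) ^ k *ᵥ u = 0) (t : ℝ) :
    NormedSpace.exp ((t : ℂ) • A) *ᵥ u =
      ∑ n ∈ Finset.range k, (Complex.exp (t * μ) * (n.factorial : ℂ)⁻¹ * t ^ n) •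
        ((A - μ • 1) ^ n *ᵥ u) := by
  have e1 : (t : ℂ) • A = Matrix.diagonal (fun _ => t * μ) + (t : ℂ) • (A - μ • 1) := by
    rw [smul_sub, smul_smul, ← Matrix.smul_one_eq_diagonal]; abel
  have hc : Commute (Matrix.diagonal (fun _ : m => t * μ)) ((t : ℂ) • (A - μ • 1)) := by
    rw [← Matrix.smul_one_eq_diagonal]
    exact (Commute.one_left _).smul_left _
  rw [e1, Matrix.exp_add_of_commute _ _ hc, Matrix.exp_diagonal, ← Matrix.mulVec_mulVec]
  have h1 := (mexp_hasSum ((t : ℂ) • (A - μ • 1))).map (AddMonoidHom.mk' (fun M : Matrix m m ℂ => M *ᵥ u)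
    (fun a b => Matrix.add_mulVec a b u)) (by show Continuous (fun M : Matrix m m ℂ => M *ᵥ u); fun_prop)
  have h2 : NormedSpace.exp ((t : ℂ) • (A - μ • 1)) *ᵥ u =
      ∑ n ∈ Finset.range k, ((n.factorial : ℂ)⁻¹ * t ^ n) • ((A - μ • 1) ^ n *ᵥ u) := by
    refine h1.unique ?_
    have e2 : ∑ n ∈ Finset.range k, ((n.factorial : ℂ)⁻¹ * t ^ n) • ((A - μ • 1) ^ n *ᵥ u) =
      ∑ n ∈ Finset.range k, ((AddMonoidHom.mk' (fun M : Matrix m m ℂ => M *ᵥ u)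
    (fun a b => Matrix.add_mulVec a b u)) ∘ fun n : ℕ => (n.factorial : ℂ)⁻¹ • ((t : ℂ) • (A - μ • 1)) ^ n) n := ?_
    rw [e2]
    refine hasSum_sum_of_ne_finset_zero ?_
    rotate_left
    · refine Finset.sum_congr rfl fun n _ => ?_
      simp only [Function.comp, AddMonoidHom.mk'_apply, smul_pow, Matrix.smul_mulVec, smul_smul]
    · intro n hn
      obtain ⟨d, rfl⟩ := Nat.exists_eq_add_of_le (not_lt.mp (mt Finset.mem_range.mpr hn))
      simp only [Function.comp, AddMonoidHom.mk'_apply, smul_pow, Matrix.smul_mulVec]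
      rw [add_comm k d, pow_add (A - μ • 1), ← Matrix.mulVec_mulVec, hk]
      simp
  rw [h2]
  ext i
  have e3 : NormedSpace.exp (fun _ : m => (t : ℂ) * μ) i = Complex.exp (t * μ) := by
    rw [Pi.coe_exp, Complex.exp_eq_exp_ℂ]
  simp only [Matrix.mulVec_diagonal, Finset.sum_apply, Pi.smul_apply, smul_eq_mul, Finset.mul_sum, e3]
  exact Finset.sum_congr rfl fun n _ => by ring

lemma exp_pow_tendsto (μ : ℂ) (hμ : μ.re < 0) (n : ℕ) (c : ℂ) :
    Tendsto (fun t : ℝ => Complex.exp (t * μ) * c * (t : ℂ) ^ n) atTop (𝓝 0) := by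
  rw [tendsto_zero_iff_norm_tendsto_zero]
  have h := (Real.tendsto_pow_mul_exp_neg_atTop_nhds_zero n)
  have h2 := (h.comp (tendsto_id.const_mul_atTop (neg_pos.mpr hμ))).const_mul (‖c‖ * ((-μ.re) ^ n)⁻¹)
  rw [mul_zero] at h2
  refine h2.congr' ?_
  filter_upwards [eventually_ge_atTop 0] with t ht
  have : (-μ.re)^n ≠ 0 := pow_ne_zero _ (by linarith)
  simp only [Function.comp, id, norm_mul, norm_pow, Complex.norm_exp, Complex.norm_real, Real.norm_of_nonneg ht, mul_pow]
  have e : -(-μ.re * t) = (↑t * μ).re := by simp [mul_comm]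
  rw [e]
  field_simp

lemma mexp_tendsto {m : Type*} [Fintype m] [DecidableEq m] (A : Matrix m m ℂ)
    (W : Submodule ℂ (m → ℂ)) (hW : ∀ w ∈ W, A *ᵥ w ∈ W)
    (he : ∀ (μ : ℂ), ∀ w ∈ W, A *ᵥ w = μ • w → w ≠ 0 → μ.re < 0)
    (w : m → ℂ) (hw : w ∈ W) :
    Tendsto (fun t : ℝ => NormedSpace.exp ((t : ℂ) • A) *ᵥ w) atTop (𝓝 0) := by
  have hs : W = ⨆ μ, W ⊓ Module.End.genEigenspace (Matrix.toLin' A) μ ⊤ :=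
    Submodule.eq_iSup_inf_genEigenspace ⊤ (fun x hx => by simpa using hW x hx)
      (Module.End.iSup_maxGenEigenspace_eq_top _)
  rw [hs] at hw
  induction hw using Submodule.iSup_induction' with
  | zero => simp
  | add x y _ _ hx hy => simpa [Matrix.mulVec_add] using hx.add hy
  | mem μ x hx =>
    obtain ⟨hxW, hx⟩ := hx
    obtain ⟨k, hk⟩ := (Module.End.mem_maxGenEigenspace _ _ _).mp hx
    have hpow : ∀ n : ℕ, ∀ v, ((Matrix.toLin' A - μ • 1) ^ n) v = (A - μ • 1) ^ n *ᵥ v := by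
      intro n v
      have : Matrix.toLin' A - μ • (1 : Module.End ℂ (m → ℂ)) = Matrix.toLin' (A - μ • 1) := by
        simp [Module.End.one_eq_id]
      rw [this, ← Matrix.toLin'_pow, Matrix.toLin'_apply]
    rw [hpow] at hk
    by_cases hx0 : x = 0
    · simp [hx0]
    have hμ : μ.re < 0 := by
      classical
      have hex : ∃ k : ℕ, (A - μ • 1) ^ k *ᵥ x = 0 := ⟨k, hk⟩
      have h0 : Nat.find hex ≠ 0 := by
        intro h
        have := Nat.find_spec hex
        rw [h] at this
        simp at this
        exact hx0 this
      obtain ⟨d, hd⟩ := Nat.exists_eq_succ_of_ne_zero h0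
      have h1 := Nat.find_spec hex
      rw [hd, pow_succ', ← Matrix.mulVec_mulVec, Matrix.sub_mulVec, Matrix.smul_mulVec, Matrix.one_mulVec, sub_eq_zero] at h1
      have h2 : (A - μ • 1) ^ d *ᵥ x ≠ 0 := Nat.find_min hex (by omega)
      refine he μ _ ?_ h1 h2
      clear h1 h2 hd
      induction d with
      | zero => simpa using hxW
      | succ d ih =>
        rw [pow_succ', ← Matrix.mulVec_mulVec, Matrix.sub_mulVec, Matrix.smul_mulVec, Matrix.one_mulVec]
        exact W.sub_mem (hW _ ih) (W.smul_mem _ ih)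
    simp_rw [mexp_genEig A μ x k hk]
    rw [← Finset.sum_const_zero (s := Finset.range k)]
    refine tendsto_finsetSum _ fun n _ => ?_
    simpa using (exp_pow_tendsto μ hμ n _).smul_const ((A - μ • 1) ^ n *ᵥ x)

/-- real maximum principle -/
lemma ker_max {p : ℕ} (Γ : Matrix (Fin p) (Fin p) ℝ) (h : IsInterconnection Γ) (k : Fin p)
    (hk : ∀ i : Fin p, Relation.ReflTransGen (fun a b => 0 < Γ a b) i k)
    (y : Fin p → ℝ) (hy : Γ *ᵥ y = 0) (i : Fin p) : y i ≤ y k := by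
  have : Nonempty (Fin p) := ⟨k⟩
  obtain ⟨m, hm⟩ := Finite.exists_max y
  have key : ∀ b, Relation.ReflTransGen (fun a b => 0 < Γ a b) m b → y b = y m := by
    intro b hb
    induction hb with
    | refl => rfl
    | @tail b c _ hbc ih =>
      have h1 : ∑ j, Γ b j * (y m - y j) = 0 := by
        have := congrFun hy b
        simp only [Matrix.mulVec, dotProduct, Pi.zero_apply] at this
        simp only [mul_sub, Finset.sum_sub_distrib, ← Finset.sum_mul, h.2 b, this]
        simp
      have h2 : ∀ j ∈ Finset.univ, 0 ≤ Γ b j * (y m - y j) := by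
        intro j _
        by_cases hj : b = j
        · subst hj; simp [ih]
        · exact mul_nonneg (h.1 b j hj) (sub_nonneg.mpr (hm j))
      have h3 := (Finset.sum_eq_zero_iff_of_nonneg h2).mp h1 c (Finset.mem_univ _)
      rcases mul_eq_zero.mp h3 with h4 | h4
      · linarith
      · linarith
  rw [key k (hk m)]
  exact hm i

lemma ker_const {p : ℕ} (Γ : Matrix (Fin p) (Fin p) ℝ) (h : IsInterconnection Γ) (k : Fin p)
    (hk : ∀ i : Fin p, Relation.ReflTransGen (fun a b => 0 < Γ a b) i k)
    (y : Fin p → ℝ) (hy : Γ *ᵥ y = 0) (i : Fin p) : y i = y k := by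
  refine le_antisymm (ker_max Γ h k hk y hy i) ?_
  have := ker_max Γ h k hk (-y) (by rw [Matrix.mulVec_neg, hy, neg_zero]) i
  simpa using this

lemma ker_const_complex {p : ℕ} (Γ : Matrix (Fin p) (Fin p) ℝ) (h : IsInterconnection Γ) (k : Fin p)
    (hk : ∀ i : Fin p, Relation.ReflTransGen (fun a b => 0 < Γ a b) i k)
    (y : Fin p → ℂ) (hy : ∀ i, ∑ j, (Γ i j : ℂ) * y j = 0) (i : Fin p) : y i = y k := by
  apply Complex.ext
  · refine ker_const Γ h k hk (fun j => (y j).re) ?_ i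
    funext i
    simpa [Matrix.mulVec, dotProduct] using congrArg Complex.re (hy i)
  · refine ker_const Γ h k hk (fun j => (y j).im) ?_ i
    funext i
    simpa [Matrix.mulVec, dotProduct] using congrArg Complex.im (hy i)

/-- Gershgorin: eigenvalues with nonnegative real part vanish -/
lemma eig_zero {p : ℕ} (Γ : Matrix (Fin p) (Fin p) ℝ) (h : IsInterconnection Γ)
    (y : Fin p → ℂ) (lam : ℂ) (hy : ∀ i, ∑ j, (Γ i j : ℂ) * y j = lam * y i) (hy0 : y ≠ 0)
    (hl : 0 ≤ lam.re) : lam = 0 := by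
  obtain ⟨a, ha⟩ := Function.ne_iff.mp hy0
  have : Nonempty (Fin p) := ⟨a⟩
  obtain ⟨m, hm⟩ := Finite.exists_max (fun j => ‖y j‖)
  have hpos : 0 < ‖y m‖ := lt_of_lt_of_le (norm_pos_iff.mpr ha) (hm a)
  have hd : ∑ j ∈ Finset.univ.erase m, Γ m j = - Γ m m := by
    have := Finset.add_sum_erase Finset.univ (fun j => Γ m j) (Finset.mem_univ m)
    rw [h.2 m] at this
    linarith
  have hd0 : 0 ≤ - Γ m m := by
    rw [← hd]
    exact Finset.sum_nonneg fun j hj => h.1 m j (Finset.ne_of_mem_erase hj).symm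
  have e : (lam - Γ m m) * y m = ∑ j ∈ Finset.univ.erase m, (Γ m j : ℂ) * y j := by
    have := Finset.add_sum_erase Finset.univ (fun j => (Γ m j : ℂ) * y j) (Finset.mem_univ m)
    rw [hy m] at this
    linear_combination -this
  have hn : ‖lam - Γ m m‖ * ‖y m‖ ≤ (- Γ m m) * ‖y m‖ := by
    rw [← norm_mul, e, ← hd, Finset.sum_mul]
    refine norm_sum_le_of_le _ fun j hj => ?_
    have := h.1 m j (Finset.ne_of_mem_erase hj).symm
    rw [norm_mul, Complex.norm_real, Real.norm_of_nonneg this]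
    exact mul_le_mul_of_nonneg_left (hm j) this
  have hn2 : ‖lam - Γ m m‖ ≤ - Γ m m := le_of_mul_le_mul_right hn hpos
  have hsq : ‖lam - Γ m m‖ ^ 2 ≤ (- Γ m m) ^ 2 := by gcongr
  rw [Complex.sq_norm, Complex.normSq_apply] at hsq
  simp at hsq
  have him : lam.im = 0 := by nlinarith [mul_nonneg hl hd0, sq_nonneg lam.re, sq_nonneg lam.im]
  have hre : lam.re = 0 := by nlinarith [mul_nonneg hl hd0, sq_nonneg lam.re, sq_nonneg lam.im]
  exact Complex.ext hre him

lemma re_lam (μ : ℂ) (h : 0 ≤ μ.re) : 0 ≤ (μ + μ⁻¹).re := by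
  rw [Complex.add_re, Complex.inv_re]
  have := Complex.normSq_nonneg μ
  positivity

lemma osc_eig {p : ℕ} (Γ : Matrix (Fin p) (Fin p) ℝ) (hΓ : IsConnectedInterconnection Γ)
    (r : Fin p → ℝ) (hr1 : ∑ i, r i = 1) (x y : Fin p → ℂ) (μ : ℂ)
    (hx : ∀ i, y i = μ * x i) (hy : ∀ i, -x i + ∑ j, (Γ i j : ℂ) * y j = μ * y i)
    (hry : ∑ i, (r i : ℂ) * y i = 0) (h0 : ¬ (x = 0 ∧ y = 0)) : μ.re < 0 := by
  by_contra! hμ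
  obtain ⟨h, k, hk⟩ := hΓ
  have hx0 : y = 0 → x = 0 := by
    intro hy0
    funext i
    have := hy i
    simpa [hy0] using this
  have hy0 : y ≠ 0 := fun e => h0 ⟨hx0 e, e⟩
  have hμ0 : μ ≠ 0 := by
    rintro rfl
    exact hy0 (funext fun i => by simpa using hx i)
  have he : ∀ i, ∑ j, (Γ i j : ℂ) * y j = (μ + μ⁻¹) * y i := by
    intro i
    have : x i = μ⁻¹ * y i := by rw [hx i]; field_simp
    have h2 := hy i
    rw [this] at h2
    linear_combination h2
  have hl := eig_zero Γ h y _ he hy0 (re_lam μ hμ)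
  simp_rw [hl, zero_mul] at he
  have hc := ker_const_complex Γ h k hk y he
  have : y k = 0 := by
    simp_rw [hc] at hry
    rw [← Finset.sum_mul] at hry
    have h1 : ∑ i, (r i : ℂ) = 1 := by exact_mod_cast hr1
    simpa [h1] using hry
  exact hy0 (funext fun i => by rw [hc i, this]; rfl)

/-- The real system matrix. -/
noncomputable def oscMat {p : ℕ} (Γ : Matrix (Fin p) (Fin p) ℝ) :
    Matrix (Fin p × Fin 2) (Fin p × Fin 2) ℝ :=
  (1 : Matrix (Fin p) (Fin p) ℝ) ⊗ₖ !![(0 : ℝ), 1; -1, 0] + Γ ⊗ₖ !![(0 : ℝ), 0; 0, 1]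

lemma oscMat_mulVec_zero {p : ℕ} (Γ : Matrix (Fin p) (Fin p) ℝ) (w : Fin p × Fin 2 → ℂ)
    (i : Fin p) : ((oscMat Γ).map Complex.ofReal *ᵥ w) (i, 0) = w (i, 1) := by
  simp [oscMat, Matrix.mulVec, dotProduct, Fintype.sum_prod_type, Matrix.one_apply, apply_ite Complex.ofReal]

lemma oscMat_mulVec_one {p : ℕ} (Γ : Matrix (Fin p) (Fin p) ℝ) (w : Fin p × Fin 2 → ℂ)
    (i : Fin p) : ((oscMat Γ).map Complex.ofReal *ᵥ w) (i, 1) =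
      - w (i, 0) + ∑ j, (Γ i j : ℂ) * w (j, 1) := by
  simp [oscMat, Matrix.mulVec, dotProduct, Fintype.sum_prod_type, Matrix.one_apply,
    Finset.sum_add_distrib, apply_ite Complex.ofReal]

/-- The invariant complement. -/
def oscW {p : ℕ} (r : Fin p → ℝ) : Submodule ℂ (Fin p × Fin 2 → ℂ) where
  carrier := {w | ∀ l, ∑ i, (r i : ℂ) * w (i, l) = 0}
  zero_mem' := by intro l; simp
  add_mem' := by
    intro a b ha hb l
    simp [mul_add, Finset.sum_add_distrib, ha l, hb l]
  smul_mem' := by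
    intro c a ha l
    simp only [Pi.smul_apply, smul_eq_mul, mul_left_comm _ c, ← Finset.mul_sum, ha l, mul_zero]

lemma osc_tendsto {p : ℕ} (Γ : Matrix (Fin p) (Fin p) ℝ) (hΓ : IsConnectedInterconnection Γ)
    (r : Fin p → ℝ) (hr : r ᵥ* Γ = 0) (hr1 : ∑ i, r i = 1)
    (w : Fin p × Fin 2 → ℝ) (hw : ∀ l, ∑ i, r i * w (i, l) = 0) :
    Tendsto (fun t : ℝ => NormedSpace.exp (t • oscMat Γ) *ᵥ w) atTop (𝓝 0) := by
  have h := mexp_tendsto ((oscMat Γ).map Complex.ofReal) (oscW r) ?_ ?_ (fun a => (w a : ℂ)) ?_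
  · rw [tendsto_pi_nhds] at h ⊢
    intro a
    have h2 := (Complex.continuous_re.tendsto _).comp (h a)
    refine h2.congr fun t => ?_
    have e : (t : ℂ) • (oscMat Γ).map Complex.ofReal = (t • oscMat Γ).map Complex.ofReal := by
      ext i j; simp
    simp only [Function.comp]
    rw [e, ← mexp_ofReal]
    simp [Matrix.mulVec, dotProduct]
  · intro w hw l
    fin_cases l
    · simpa only [Fin.zero_eta, oscMat_mulVec_zero] using hw 1
    · simp only [Fin.mk_one, oscMat_mulVec_one, mul_add, mul_neg, Finset.sum_add_distrib,
        Finset.sum_neg_distrib, hw 0, neg_zero, zero_add, Finset.mul_sum]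
      rw [Finset.sum_comm]
      refine Finset.sum_eq_zero fun j _ => ?_
      have := congrFun hr j
      simp only [Matrix.vecMul, dotProduct, Pi.zero_apply] at this
      have h2 : ∑ i, (r i : ℂ) * (Γ i j : ℂ) = 0 := by exact_mod_cast this
      simp only [← mul_assoc, ← Finset.sum_mul, h2, zero_mul]
  · intro μ w hw he hw0
    refine osc_eig Γ hΓ r hr1 (fun i => w (i, 0)) (fun i => w (i, 1)) μ ?_ ?_ (hw 1) ?_
    · intro i
      simpa only [oscMat_mulVec_zero, Pi.smul_apply, smul_eq_mul] using congrFun he (i, 0)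
    · intro i
      simpa only [oscMat_mulVec_one, Pi.smul_apply, smul_eq_mul] using congrFun he (i, 1)
    · rintro ⟨h0, h1⟩
      apply hw0
      funext ⟨i, l⟩
      fin_cases l
      · exact congrFun h0 i
      · exact congrFun h1 i
  · intro l
    have := hw l
    show ∑ i, (r i : ℂ) * (w (i, l) : ℂ) = 0
    exact_mod_cast this

lemma osc_sync {p : ℕ} (Γ : Matrix (Fin p) (Fin p) ℝ) (hΓ : IsInterconnection Γ)
    (r : Fin p → ℝ) (z0 : Fin p × Fin 2 → ℝ) (t : ℝ) :
    NormedSpace.exp (t • oscMat Γ) *ᵥ (fun a => ∑ j, r j * z0 (j, a.2)) =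
      (vecMulVec (fun _ => (1 : ℝ)) r ⊗ₖ NormedSpace.exp (t • !![(0 : ℝ), 1; -1, 0])) *ᵥ z0 := by
  have hX := mexp_intertwine (t • oscMat Γ) (t • !![(0 : ℝ), 1; -1, 0])
    (Matrix.of fun (a : Fin p × Fin 2) (l : Fin 2) => if a.2 = l then (1 : ℝ) else 0) (by
      rw [Matrix.smul_mul, Matrix.mul_smul]
      congr 1
      ext ⟨i, a⟩ l
      have h2 := hΓ.2 i
      fin_cases a <;> fin_cases l <;>
        simp [oscMat, Matrix.mul_apply, Fintype.sum_prod_type, Matrix.one_apply, h2,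
          Finset.sum_add_distrib, apply_ite Complex.ofReal])
  have e : (fun a : Fin p × Fin 2 => ∑ j, r j * z0 (j, a.2)) =
      (Matrix.of fun (a : Fin p × Fin 2) (l : Fin 2) => if a.2 = l then (1 : ℝ) else 0) *ᵥ
        (fun l => ∑ j, r j * z0 (j, l)) := by
    funext a
    simp [Matrix.mulVec, dotProduct]
  rw [e, Matrix.mulVec_mulVec, hX, ← Matrix.mulVec_mulVec]
  funext ⟨i, a⟩
  simp only [Matrix.mulVec, dotProduct, Matrix.of_apply, ite_mul, one_mul, zero_mul,
    Finset.sum_ite_eq, Finset.mem_univ, if_true, Fintype.sum_prod_type, Matrix.kroneckerMap_apply,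
    Matrix.vecMulVec_apply]
  simp only [Finset.mul_sum]
  rw [Finset.sum_comm]
  exact Finset.sum_congr rfl fun j _ => Finset.sum_congr rfl fun l _ => by ring

/-- Coupled harmonic oscillators with connected interconnection synchronize:
the stacked state `z(t) = exp(t(I_p ⊗ A₀ + Γ ⊗ E)) z(0)` converges to
`(1rᵀ ⊗ exp(tA₀)) z(0)`, and in particular the oscillators synchronize. -/
theorem coupled_harmonic_oscillators_synchronize
    (p : ℕ) (Γ : Matrix (Fin p) (Fin p) ℝ) (hΓ : IsConnectedInterconnection Γ)
    (r : Fin p → ℝ) (hr : r ᵥ* Γ = 0) (hr1 : ∑ i, r i = 1)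
    (z0 : Fin p × Fin 2 → ℝ) :
    Tendsto (fun t : ℝ =>
        NormedSpace.exp (t • ((1 : Matrix (Fin p) (Fin p) ℝ) ⊗ₖ !![(0 : ℝ), 1; -1, 0]
            + Γ ⊗ₖ !![(0 : ℝ), 0; 0, 1])) *ᵥ z0
          - (vecMulVec (fun _ => (1 : ℝ)) r
              ⊗ₖ NormedSpace.exp (t • !![(0 : ℝ), 1; -1, 0])) *ᵥ z0)
      atTop (nhds 0) ∧
    ∃ zbar : ℝ → Fin 2 → ℝ, ∀ i : Fin p,
      Tendsto (fun t : ℝ => (fun k : Fin 2 =>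
          (NormedSpace.exp (t • ((1 : Matrix (Fin p) (Fin p) ℝ) ⊗ₖ !![(0 : ℝ), 1; -1, 0]
              + Γ ⊗ₖ !![(0 : ℝ), 0; 0, 1])) *ᵥ z0) (i, k) - zbar t k))
        atTop (nhds 0) := by
  have main : Tendsto (fun t : ℝ =>
        NormedSpace.exp (t • oscMat Γ) *ᵥ z0
          - (vecMulVec (fun _ => (1 : ℝ)) r
              ⊗ₖ NormedSpace.exp (t • !![(0 : ℝ), 1; -1, 0])) *ᵥ z0)
      atTop (nhds 0) := by
    have h := osc_tendsto Γ hΓ r hr hr1 (z0 - fun a => ∑ j, r j * z0 (j, a.2)) (by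
      intro l
      simp only [Pi.sub_apply, mul_sub, Finset.sum_sub_distrib, ← Finset.sum_mul, hr1, one_mul,
        sub_self])
    refine h.congr fun t => ?_
    rw [Matrix.mulVec_sub, osc_sync Γ hΓ.1]
  refine ⟨main, fun t k => ∑ j, ∑ l, r j * NormedSpace.exp (t • !![(0 : ℝ), 1; -1, 0]) k l *
    z0 (j, l), fun i => ?_⟩
  rw [tendsto_pi_nhds] at main ⊢
  intro k
  refine (main (i, k)).congr fun t => ?_
  rw [Pi.sub_apply]
  congr 1
  simp [Matrix.mulVec, dotProduct, Fintype.sum_prod_type, Matrix.kroneckerMap_apply,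
    Matrix.vecMulVec_apply]
end

section
/- Let A ∈ ℝ^{n×n} be neutrally stable and let C ∈ ℝ^{m×n} be such that the pair (C,A) is detectable. Then there exists L ∈ ℝ^{n×m} such that for every p, every connected interconnection Γ ∈ ℝ^{p×p}, every r ∈ ℝ^p with rᵀΓ = 0 and rᵀ1 = 1, and every initial vector x(0) ∈ ℝ^{pn}, the solution x(t) = exp(t(I_p ⊗ A + Γ ⊗ LC)) x(0) satisfies |x(t) − (1rᵀ ⊗ exp(tA)) x(0)| → 0 as t → ∞; in particular the blocks x_i(t) synchronize to x̄(t) = (rᵀ ⊗ exp(tA)) x(0). -/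
open Matrix Filter Topology
open scoped Kronecker

section ExpLemmas
open scoped Nat

theorem aux_hasSum_exp {ι 𝕜 : Type*} [Fintype ι] [DecidableEq ι] [RCLike 𝕜] (M : Matrix ι ι 𝕜) :
    HasSum (fun k : ℕ => ((k ! : 𝕜)⁻¹) • M ^ k) (NormedSpace.exp M) :=
  open scoped Norms.Operator in NormedSpace.exp_series_hasSum_exp' (𝕂 := 𝕜) M

theorem aux_hasSum_exp_mulVec {ι 𝕜 : Type*} [Fintype ι] [DecidableEq ι] [RCLike 𝕜]
    (M : Matrix ι ι 𝕜) (x : ι → 𝕜) :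
    HasSum (fun k : ℕ => ((k ! : 𝕜)⁻¹) • (M ^ k *ᵥ x)) (NormedSpace.exp M *ᵥ x) := by
  have hc : Continuous (fun N : Matrix ι ι 𝕜 => N *ᵥ x) :=
    Continuous.matrix_mulVec continuous_id continuous_const
  have := (aux_hasSum_exp M).map (⟨⟨fun N : Matrix ι ι 𝕜 => N *ᵥ x, by simp⟩,
    fun a b => by simp [Matrix.add_mulVec]⟩ : Matrix ι ι 𝕜 →+ (ι → 𝕜)) hc
  simpa [Function.comp_def, Matrix.smul_mulVec] using this

theorem aux_exp_intertwine {ι κ 𝕜 : Type*} [Fintype ι] [DecidableEq ι] [Fintype κ] [DecidableEq κ]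
    [RCLike 𝕜] (M : Matrix ι ι 𝕜) (D : Matrix κ κ 𝕜) (J : Matrix ι κ 𝕜) (h : M * J = J * D)
    (x : κ → 𝕜) :
    NormedSpace.exp M *ᵥ (J *ᵥ x) = J *ᵥ (NormedSpace.exp D *ᵥ x) := by
  have hk : ∀ k : ℕ, M ^ k * J = J * D ^ k := by
    intro k
    induction k with
    | zero => simp
    | succ k ih => rw [pow_succ, Matrix.mul_assoc, h, ← Matrix.mul_assoc, ih, Matrix.mul_assoc,
        ← pow_succ]
  have h1 := aux_hasSum_exp_mulVec M (J *ᵥ x)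
  have hc : Continuous (fun N : κ → 𝕜 => J *ᵥ N) :=
    Continuous.matrix_mulVec continuous_const continuous_id
  have h2 := (aux_hasSum_exp_mulVec D x).map (J.mulVecLin) hc
  refine h1.unique ?_
  rw [Matrix.mulVecLin_apply] at h2
  convert h2 using 2 with k
  simp [hk]

theorem aux_exp_shift {ι : Type*} [Fintype ι] [DecidableEq ι] (M : Matrix ι ι ℂ) (μ t : ℂ)
    (k : ℕ) (u : ι → ℂ) (hu : (M - μ • 1) ^ k *ᵥ u = 0) :
    NormedSpace.exp (t • M) *ᵥ u =
      ∑ j ∈ Finset.range k, (Complex.exp (t * μ) * t ^ j * (j ! : ℂ)⁻¹) • ((M - μ • 1) ^ j *ᵥ u) := by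
  have e : t • M = (t * μ) • (1 : Matrix ι ι ℂ) + t • (M - μ • 1) := by
    rw [smul_sub, smul_smul]; abel
  have hc : Commute ((t * μ) • (1 : Matrix ι ι ℂ)) (t • (M - μ • 1)) :=
    (Commute.one_left _).smul_left _
  have e1 : NormedSpace.exp ((t * μ) • (1 : Matrix ι ι ℂ)) = Complex.exp (t * μ) • 1 := by
    have : (t * μ) • (1 : Matrix ι ι ℂ) = diagonal (fun _ => t * μ) := by
      rw [← Matrix.diagonal_one, ← Matrix.diagonal_smul]; congr 1; ext; simp
    rw [this, Matrix.exp_diagonal, ← Matrix.diagonal_one, ← Matrix.diagonal_smul]; congr 1; ext i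
    simp [Complex.exp_eq_exp_ℂ]
  rw [e, Matrix.exp_add_of_commute _ _ hc, e1, smul_mul_assoc, one_mul, Matrix.smul_mulVec]
  have h1 := aux_hasSum_exp_mulVec (t • (M - μ • 1)) u
  have h2 := hasSum_sum_of_ne_finset_zero (L := SummationFilter.unconditional ℕ) (f := fun k : ℕ => ((k ! : ℂ)⁻¹) • ((t • (M - μ • 1)) ^ k *ᵥ u))
    (s := Finset.range k) (by
      intro j hj
      have hj : k ≤ j := by simpa using hj
      obtain ⟨d, rfl⟩ := Nat.exists_eq_add_of_le hj
      rw [smul_pow, Matrix.smul_mulVec, add_comm k d, pow_add (M - μ • 1), ← Matrix.mulVec_mulVec, hu]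
      simp)
  rw [h1.unique h2, Finset.smul_sum]
  refine Finset.sum_congr rfl fun j _ => ?_
  rw [smul_pow, Matrix.smul_mulVec, smul_smul, smul_smul]
  congr 1; ring

theorem aux_exp_eig {ι : Type*} [Fintype ι] [DecidableEq ι] (M : Matrix ι ι ℂ) (μ t : ℂ)
    (u : ι → ℂ) (hu : M *ᵥ u = μ • u) :
    NormedSpace.exp (t • M) *ᵥ u = Complex.exp (t * μ) • u := by
  rw [aux_exp_shift M μ t 1 u (by simp [Matrix.sub_mulVec, Matrix.smul_mulVec, hu])]
  simp

theorem aux_scalar_tendsto (μ : ℂ) (hμ : μ.re < 0) (j : ℕ) (c : ℂ) :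
    Tendsto (fun t : ℝ => Complex.exp ((t : ℂ) * μ) * (t : ℂ) ^ j * c) atTop (𝓝 0) := by
  rw [← zero_mul c]
  refine Tendsto.mul_const c ?_
  rw [tendsto_zero_iff_norm_tendsto_zero]
  have := tendsto_rpow_mul_exp_neg_mul_atTop_nhds_zero j (-μ.re) (by linarith)
  refine this.congr' ?_
  filter_upwards [eventually_ge_atTop 0] with t ht
  simp only [norm_mul, norm_pow, Complex.norm_exp, Complex.norm_real, Real.norm_eq_abs, abs_of_nonneg ht,
    Real.rpow_natCast]
  rw [mul_comm]; congr 2; simp [mul_comm]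

theorem aux_tendsto_exp {ι : Type*} [Fintype ι] [DecidableEq ι] (M : Matrix ι ι ℂ)
    (W : Submodule ℂ (ι → ℂ)) (hinv : ∀ x ∈ W, M *ᵥ x ∈ W)
    (hev : ∀ (μ : ℂ), ∀ v ∈ W, v ≠ 0 → M *ᵥ v = μ • v → μ.re < 0) (x : ι → ℂ) (hx : x ∈ W) :
    Tendsto (fun t : ℝ => NormedSpace.exp ((t : ℂ) • M) *ᵥ x) atTop (𝓝 0) := by
  have key := Submodule.eq_iSup_inf_genEigenspace (p := W) (f := Matrix.toLin' M) ⊤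
    (fun x hx => by simpa using hinv x hx)
    (Module.End.iSup_maxGenEigenspace_eq_top _)
  rw [key] at hx
  refine Submodule.iSup_induction _ (motive := fun x =>
    Tendsto (fun t : ℝ => NormedSpace.exp ((t : ℂ) • M) *ᵥ x) atTop (𝓝 0)) hx ?_ ?_ ?_
  · rintro μ u ⟨huW, hu⟩
    have hu' := (Module.End.mem_maxGenEigenspace (Matrix.toLin' M) μ u).1 hu
    have hN : ∀ k : ℕ, ((Matrix.toLin' M - μ • (1 : Module.End ℂ (ι → ℂ))) ^ k) u
        = (M - μ • 1) ^ k *ᵥ u := by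
      intro k
      have : (Matrix.toLin' M - μ • (1 : Module.End ℂ (ι → ℂ))) = Matrix.toLin' (M - μ • 1) := by
        simp [Module.End.one_eq_id]
      rw [this, ← Matrix.toLin'_pow, Matrix.toLin'_apply]
    obtain ⟨k, hk⟩ := hu'
    rw [hN] at hk
    by_cases hu0 : u = 0
    · subst hu0; simp
    have hex : ∃ k : ℕ, (M - μ • 1) ^ k *ᵥ u = 0 := ⟨k, hk⟩
    classical
    have hW : ∀ k : ℕ, (M - μ • 1) ^ k *ᵥ u ∈ W := by
      intro k
      induction k with
      | zero => simpa using huW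
      | succ k ih =>
        rw [pow_succ', ← Matrix.mulVec_mulVec, Matrix.sub_mulVec, Matrix.smul_mulVec, Matrix.one_mulVec]
        exact W.sub_mem (hinv _ ih) (W.smul_mem _ ih)
    have hμ : μ.re < 0 := by
      have h0 := Nat.find_spec hex
      rcases hf : Nat.find hex with _ | d
      · rw [hf] at h0; simp at h0; exact absurd h0 hu0
      · have hne : (M - μ • 1) ^ d *ᵥ u ≠ 0 := Nat.find_min hex (by omega)
        refine hev μ _ (hW d) hne ?_
        rw [hf, pow_succ', ← Matrix.mulVec_mulVec, Matrix.sub_mulVec, Matrix.smul_mulVec, Matrix.one_mulVec] at h0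
        exact sub_eq_zero.1 h0
    have : ∀ t : ℝ, NormedSpace.exp ((t : ℂ) • M) *ᵥ u = _ := fun t => aux_exp_shift M μ t k u hk
    simp_rw [this]
    rw [show (0 : ι → ℂ) = ∑ j ∈ Finset.range k, (0 : ℂ) • ((M - μ • 1) ^ j *ᵥ u) by simp]
    exact tendsto_finsetSum _ fun j _ => (aux_scalar_tendsto μ hμ j _).smul_const _
  · simp
  · intro a b ha hb
    simpa [Matrix.mulVec_add] using ha.add hb

theorem aux_exp_map {ι : Type*} [Fintype ι] [DecidableEq ι] (M : Matrix ι ι ℝ) (t : ℝ) :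
    (NormedSpace.exp (t • M)).map Complex.ofReal
      = NormedSpace.exp ((t : ℂ) • M.map Complex.ofReal) := by
  have h : (t : ℂ) • M.map Complex.ofReal = Complex.ofRealHom.mapMatrix (t • M) := by
    ext i j; simp
  rw [h]
  have hc : Continuous (Complex.ofRealHom.mapMatrix : Matrix ι ι ℝ →+* Matrix ι ι ℂ) :=
    Continuous.matrix_map continuous_id Complex.continuous_ofReal
  exact (open scoped Norms.Operator in
    NormedSpace.map_exp (Complex.ofRealHom.mapMatrix : Matrix ι ι ℝ →+* Matrix ι ι ℂ) hc (t • M))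

end ExpLemmas

theorem aux_gamma_step {p : ℕ} (Γ : Matrix (Fin p) (Fin p) ℝ) (hΓ : IsInterconnection Γ)
    (u : Fin p → ℂ) (σ : ℂ) (hu : Γ.map Complex.ofReal *ᵥ u = σ • u) (hσ : 0 ≤ σ.re)
    (i : Fin p) (hi : ∀ j, ‖u j‖ ≤ ‖u i‖) :
    σ * u i = 0 ∧ ∀ j, 0 < Γ i j → u j = u i := by
  have hsum : ∑ j, (Γ i j : ℂ) * (u j - u i) = σ * u i := by
    have h1 := congrFun hu i
    simp only [mulVec, dotProduct, Matrix.map_apply, Pi.smul_apply, smul_eq_mul] at h1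
    have h2 : ∑ j, (Γ i j : ℂ) = 0 := by exact_mod_cast hΓ.2 i
    simp_rw [mul_sub, Finset.sum_sub_distrib, ← Finset.sum_mul, h2, h1]; simp
  have hre : ∀ j, ((u j - u i) * (starRingEnd ℂ) (u i)).re ≤ 0 ∧
      (((u j - u i) * (starRingEnd ℂ) (u i)).re = 0 → u j = u i) := by
    intro j
    have h : ‖u j‖ ^ 2 ≤ ‖u i‖ ^ 2 := by gcongr; exact hi j
    rw [Complex.sq_norm, Complex.sq_norm, Complex.normSq_apply, Complex.normSq_apply] at h
    simp only [Complex.mul_re, Complex.sub_re, Complex.sub_im, Complex.conj_re, Complex.conj_im]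
    constructor
    · nlinarith [sq_nonneg ((u j).re - (u i).re), sq_nonneg ((u j).im - (u i).im)]
    · intro h0
      have h3 : ((u j).re - (u i).re) ^ 2 = 0 := by
        nlinarith [sq_nonneg ((u j).re - (u i).re), sq_nonneg ((u j).im - (u i).im)]
      have h4 : ((u j).im - (u i).im) ^ 2 = 0 := by
        nlinarith [sq_nonneg ((u j).re - (u i).re), sq_nonneg ((u j).im - (u i).im)]
      apply Complex.ext
      · exact sub_eq_zero.1 (pow_eq_zero_iff (two_ne_zero) |>.1 h3)
      · exact sub_eq_zero.1 (pow_eq_zero_iff (two_ne_zero) |>.1 h4)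
  have hterm : ∀ j ∈ Finset.univ, Γ i j * ((u j - u i) * (starRingEnd ℂ) (u i)).re ≤ 0 := by
    intro j _
    by_cases hij : i = j
    · subst hij; simp
    · exact mul_nonpos_of_nonneg_of_nonpos (hΓ.1 i j hij) (hre j).1
  have htot : ∑ j, Γ i j * ((u j - u i) * (starRingEnd ℂ) (u i)).re = σ.re * Complex.normSq (u i) := by
    have := congrArg (fun z : ℂ => (z * (starRingEnd ℂ) (u i)).re) hsum
    simp only [Finset.sum_mul, Complex.re_sum, mul_assoc, Complex.mul_conj, Complex.re_ofReal_mul,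
      Complex.re_mul_ofReal] at this
    exact this
  have h0 : ∑ j, Γ i j * ((u j - u i) * (starRingEnd ℂ) (u i)).re = 0 :=
    le_antisymm (Finset.sum_nonpos hterm)
      (htot ▸ mul_nonneg hσ (Complex.normSq_nonneg _))
  have hz := (Finset.sum_eq_zero_iff_of_nonpos hterm).1 h0
  have hz' : ∀ j, Γ i j = 0 ∨ u j = u i := fun j =>
    (mul_eq_zero.1 (hz j (Finset.mem_univ j))).imp id (hre j).2
  refine ⟨?_, fun j hj => (hz' j).resolve_left hj.ne'⟩
  rw [← hsum]
  refine Finset.sum_eq_zero fun j _ => ?_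
  rcases hz' j with h | h <;> simp [h]

theorem aux_gamma_max {p : ℕ} (Γ : Matrix (Fin p) (Fin p) ℝ) (hΓ : IsInterconnection Γ)
    (u : Fin p → ℂ) (σ : ℂ) (hu : Γ.map Complex.ofReal *ᵥ u = σ • u) (hσ : 0 ≤ σ.re)
    (k i : Fin p) (hik : Relation.ReflTransGen (fun a b => 0 < Γ a b) i k)
    (hi : ∀ j, ‖u j‖ ≤ ‖u i‖) : u i = u k := by
  induction hik using Relation.ReflTransGen.head_induction_on with
  | refl => rfl
  | head h _ ih =>
    have := (aux_gamma_step Γ hΓ u σ hu hσ _ hi).2 _ h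
    rw [← this]
    exact ih (by rw [this]; exact hi)

theorem aux_gamma {p : ℕ} (Γ : Matrix (Fin p) (Fin p) ℝ) (hΓ : IsConnectedInterconnection Γ)
    (u : Fin p → ℂ) (hu0 : u ≠ 0) (σ : ℂ) (hu : Γ.map Complex.ofReal *ᵥ u = σ • u)
    (hσ : 0 ≤ σ.re) : ∃ c : ℂ, u = fun _ => c := by
  obtain ⟨hI, k, hk⟩ := hΓ
  have : Nonempty (Fin p) := ⟨k⟩
  have hmax : ∀ w : Fin p → ℂ, ∃ i, ∀ j, ‖w j‖ ≤ ‖w i‖ := fun w => Finite.exists_max (fun j => ‖w j‖)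
  have hσ0 : σ = 0 := by
    obtain ⟨i, hi⟩ := hmax u
    rcases mul_eq_zero.1 (aux_gamma_step Γ hI u σ hu hσ i hi).1 with h | h
    · exact h
    · exfalso; apply hu0; ext j
      have := hi j
      rw [h, norm_zero] at this
      simpa using this
  subst hσ0
  refine ⟨u k, ?_⟩
  set w : Fin p → ℂ := fun j => u j - u k with hw
  have hwΓ : Γ.map Complex.ofReal *ᵥ w = (0 : ℂ) • w := by
    have h2 : ∀ i, ∑ j, (Γ i j : ℂ) = 0 := fun i => by exact_mod_cast hI.2 i
    ext i
    have h1 := congrFun hu i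
    simp only [mulVec, dotProduct, Matrix.map_apply, Pi.smul_apply, smul_eq_mul, zero_mul] at h1 ⊢
    simp_rw [hw, mul_sub, Finset.sum_sub_distrib, ← Finset.sum_mul, h2, h1]; simp
  obtain ⟨i, hi⟩ := hmax w
  have h := aux_gamma_max Γ hI w 0 hwΓ (by simp) k i (hk i) hi
  ext j
  have h3 := hi j
  rw [h] at h3
  simp only [hw, sub_self, norm_zero, norm_le_zero_iff] at h3
  exact sub_eq_zero.1 h3

/-- Detectability in eigenvector form. -/
theorem aux_detect (n m : ℕ) (A : Matrix (Fin n) (Fin n) ℝ) (C : Matrix (Fin m) (Fin n) ℝ)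
    (hdet : ∀ x : Fin n → ℝ,
      (∀ t : ℝ, 0 ≤ t → C *ᵥ (NormedSpace.exp (t • A) *ᵥ x) = 0) →
        Tendsto (fun t : ℝ => NormedSpace.exp (t • A) *ᵥ x) atTop (nhds 0))
    (z : Fin n → ℂ) (ρ : ℂ) (hρ : ρ.re = 0) (hz : A.map Complex.ofReal *ᵥ z = ρ • z)
    (hC : C.map Complex.ofReal *ᵥ z = 0) : z = 0 := by
  have hE : ∀ t : ℝ, (NormedSpace.exp (t • A)).map Complex.ofReal *ᵥ z
      = Complex.exp (t * ρ) • z := fun t => by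
    rw [aux_exp_map, aux_exp_eig _ ρ t z hz]
  have re_mul : ∀ {a b : ℕ} (B : Matrix (Fin a) (Fin b) ℝ) (w : Fin b → ℂ),
      B *ᵥ (fun i => (w i).re) = fun i => ((B.map Complex.ofReal *ᵥ w) i).re := by
    intro a b B w; ext i; simp [mulVec, dotProduct]
  have im_mul : ∀ {a b : ℕ} (B : Matrix (Fin a) (Fin b) ℝ) (w : Fin b → ℂ),
      B *ᵥ (fun i => (w i).im) = fun i => ((B.map Complex.ofReal *ᵥ w) i).im := by
    intro a b B w; ext i; simp [mulVec, dotProduct]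
  have h1 := hdet (fun i => (z i).re) (fun t _ => by
    rw [re_mul, hE, re_mul, Matrix.mulVec_smul, hC]; ext; simp)
  have h2 := hdet (fun i => (z i).im) (fun t _ => by
    rw [im_mul, hE, im_mul, Matrix.mulVec_smul, hC]; ext; simp)
  simp_rw [re_mul, hE] at h1
  simp_rw [im_mul, hE] at h2
  ext i
  have h1i := (tendsto_pi_nhds.1 h1) i
  have h2i := (tendsto_pi_nhds.1 h2) i
  have h3 := (h1i.pow 2).add (h2i.pow 2)
  have h4 : ∀ t : ℝ, ((Complex.exp (t * ρ) • z) i).re ^ 2 + ((Complex.exp (t * ρ) • z) i).im ^ 2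
      = Complex.normSq (z i) := by
    intro t
    have : Complex.normSq (Complex.exp (t * ρ)) = 1 := by
      rw [← Complex.sq_norm, Complex.norm_exp]; simp [hρ]
    rw [← one_mul (Complex.normSq (z i)), ← this, ← Complex.normSq_mul, Complex.normSq_apply]
    simp only [Pi.smul_apply, smul_eq_mul]; ring
  simp_rw [h4] at h3
  have h5 := tendsto_nhds_unique h3 tendsto_const_nhds
  simpa using h5.symm

theorem aux_exists_B (n : ℕ) (A : Matrix (Fin n) (Fin n) ℝ) :
    ∃ (κ : Type) (_ : Fintype κ) (B : Matrix (Fin n) κ ℝ),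
      A * (B * Bᵀ) + (B * Bᵀ) * Aᵀ = 0 ∧
      ∀ w : Fin n → ℂ, (B.map Complex.ofReal)ᵀ *ᵥ w = 0 →
        ∀ (μ : ℂ) (v : Fin n → ℂ), μ.re = 0 → A.map Complex.ofReal *ᵥ v = μ • v → w ⬝ᵥ v = 0 := by
  classical
  let S : Set (Fin n → ℂ) := {v | ∃ μ : ℂ, μ.re = 0 ∧ A.map Complex.ofReal *ᵥ v = μ • v}
  obtain ⟨T, hTS, hT⟩ := (Submodule.fg_span_iff_fg_span_finset_subset (R := ℂ) S).1
    (IsNoetherian.noetherian _)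
  let B : Matrix (Fin n) (T ⊕ T) ℝ := Matrix.of fun i s =>
    Sum.elim (fun v : T => (v.1 i).re) (fun v : T => (v.1 i).im) s
  refine ⟨T ⊕ T, inferInstance, B, ?_, ?_⟩
  · have hAB : ∀ v : T, ∃ ω : ℝ, (∀ i, (A * B) i (Sum.inl v) = -ω * (v.1 i).im) ∧
        (∀ i, (A * B) i (Sum.inr v) = ω * (v.1 i).re) := by
      intro v
      obtain ⟨μ, hμ, hv⟩ := hTS v.2
      refine ⟨μ.im, fun i => ?_, fun i => ?_⟩
      · have := congrArg Complex.re (congrFun hv i)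
        simp [mulVec, dotProduct, hμ] at this
        simp [Matrix.mul_apply, B, this]
      · have := congrArg Complex.im (congrFun hv i)
        simp [mulVec, dotProduct, hμ] at this
        simp [Matrix.mul_apply, B, this]
    choose ω h1 h2 using hAB
    have hX : ∀ i j, ((A * B) * Bᵀ) i j = ∑ v : T, ω v * ((v.1 i).re * (v.1 j).im - (v.1 i).im * (v.1 j).re) := by
      intro i j
      rw [Matrix.mul_apply, Fintype.sum_sum_type, ← Finset.sum_add_distrib]
      refine Finset.sum_congr rfl fun v _ => ?_
      rw [h1, h2]
      simp [B]; ring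
    have hsym : (B * Bᵀ) * Aᵀ = ((A * B) * Bᵀ)ᵀ := by
      simp [Matrix.transpose_mul, Matrix.mul_assoc]
    rw [hsym, ← Matrix.mul_assoc]
    ext i j
    rw [Matrix.add_apply, Matrix.transpose_apply, hX, hX, ← Finset.sum_add_distrib]
    refine Finset.sum_eq_zero fun v _ => ?_
    ring
  · intro w hw μ v hμ hv
    have hle : Submodule.span ℂ S ≤ LinearMap.ker (dotProductBilin ℂ ℂ w) := by
      rw [hT, Submodule.span_le]
      intro v hv
      have ha := congrFun hw (Sum.inl ⟨v, hv⟩)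
      have hb := congrFun hw (Sum.inr ⟨v, hv⟩)
      simp only [mulVec, dotProduct, Matrix.transpose_apply, Matrix.map_apply, B, Matrix.of_apply,
        Sum.elim_inl, Sum.elim_inr, Pi.zero_apply] at ha hb
      change w ⬝ᵥ v = 0
      have : w ⬝ᵥ v = ∑ x, ((v x).re : ℂ) * w x + Complex.I * ∑ x, ((v x).im : ℂ) * w x := by
        rw [Finset.mul_sum, ← Finset.sum_add_distrib]
        refine Finset.sum_congr rfl fun x _ => ?_
        conv_lhs => rw [← Complex.re_add_im (v x)]
        ring
      rw [this, ha, hb]; simp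
    exact hle (Submodule.subset_span ⟨μ, hμ, hv⟩)

theorem aux_dot_star {κ : Type*} [Fintype κ] (e : κ → ℂ) :
    e ⬝ᵥ star e = ((∑ i, Complex.normSq (e i) : ℝ) : ℂ) := by
  simp [dotProduct, Complex.mul_conj]

theorem aux_star_mulVec {a b : Type*} [Fintype b] (B : Matrix a b ℝ) (w : b → ℂ) :
    B.map Complex.ofReal *ᵥ (star w) = star (B.map Complex.ofReal *ᵥ w) := by
  ext i; simp [mulVec, dotProduct]

theorem aux_semisimple (n : ℕ) (N : Matrix (Fin n) (Fin n) ℂ)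
    (h : ∀ v, (N * N) *ᵥ v = 0 → N *ᵥ v = 0) (w : Fin n → ℂ)
    (hker : ∀ v, N *ᵥ v = 0 → w ⬝ᵥ v = 0) (hran : w ᵥ* N = 0) : w = 0 := by
  have hd : Disjoint (LinearMap.range N.mulVecLin) (LinearMap.ker N.mulVecLin) := by
    rw [Submodule.disjoint_def]
    rintro x ⟨y, rfl⟩ hx
    apply h y
    simpa using hx
  have htop := Submodule.eq_top_of_disjoint _ _
    (LinearMap.finrank_range_add_finrank_ker N.mulVecLin).ge hd
  have hall : ∀ v, w ⬝ᵥ v = 0 := by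
    intro v
    obtain ⟨a, ⟨y, rfl⟩, b, hb, rfl⟩ := Submodule.mem_sup.1 (htop ▸ Submodule.mem_top : v ∈ _)
    rw [dotProduct_add, hker b (by simpa using hb), Matrix.mulVecLin_apply, Matrix.dotProduct_mulVec, hran]
    simp
  exact dotProduct_eq_zero w hall

theorem aux_hurwitz (n m : ℕ) (A : Matrix (Fin n) (Fin n) ℝ) (C : Matrix (Fin m) (Fin n) ℝ)
    (hstab : ∀ μ ∈ spectrum ℂ (A.map Complex.ofReal), μ.re ≤ 0)
    (hsemisimple : ∀ μ ∈ spectrum ℂ (A.map Complex.ofReal), μ.re = 0 →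
      ∀ v : Fin n → ℂ,
        ((A.map Complex.ofReal - μ • 1) * (A.map Complex.ofReal - μ • 1)) *ᵥ v = 0 →
          (A.map Complex.ofReal - μ • 1) *ᵥ v = 0)
    (hdet : ∀ x : Fin n → ℝ,
      (∀ t : ℝ, 0 ≤ t → C *ᵥ (NormedSpace.exp (t • A) *ᵥ x) = 0) →
        Tendsto (fun t : ℝ => NormedSpace.exp (t • A) *ᵥ x) atTop (nhds 0)) :
    ∃ L : Matrix (Fin n) (Fin m) ℝ, ∀ (σ : ℂ), σ.re < 0 → ∀ (l : ℂ) (v : Fin n → ℂ), v ≠ 0 →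
      (A.map Complex.ofReal + σ • (L * C).map Complex.ofReal) *ᵥ v = l • v → l.re < 0 := by
  obtain ⟨κ, _, B, hB1, hB2⟩ := aux_exists_B n A
  refine ⟨B * Bᵀ * Cᵀ, fun σ hσ l v hv hlv => ?_⟩
  by_contra hl
  push Not at hl
  set Ac := A.map Complex.ofReal with hAc
  set Bc := B.map Complex.ofReal with hBc
  set Cc := C.map Complex.ofReal with hCc
  have mapmul : ∀ {a b c : Type} [Fintype b] (X : Matrix a b ℝ) (Z : Matrix b c ℝ),
      (X * Z).map Complex.ofReal = X.map Complex.ofReal * Z.map Complex.ofReal := by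
    intro a b c _ X Z; ext i j; simp [Matrix.mul_apply]
  have hYc : (B * Bᵀ).map Complex.ofReal = Bc * Bcᵀ := by rw [mapmul]; rfl
  have hLC : (B * Bᵀ * Cᵀ * C).map Complex.ofReal = Bc * Bcᵀ * Ccᵀ * Cc := by
    rw [mapmul, mapmul, hYc]; rfl
  have hLyap : Ac * (Bc * Bcᵀ) + (Bc * Bcᵀ) * Acᵀ = 0 := by
    have := congrArg (fun X => X.map Complex.ofReal) hB1
    beta_reduce at this
    rw [Matrix.map_add _ (by simp), mapmul A, mapmul (B * Bᵀ), hYc] at this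
    refine Eq.trans this ?_
    ext; simp
  rw [hLC] at hlv
  -- left eigenvector
  obtain ⟨w, hw0, hw⟩ : ∃ w : Fin n → ℂ, w ≠ 0 ∧
      w ᵥ* (Ac + σ • (Bc * Bcᵀ * Ccᵀ * Cc) - l • 1) = 0 := by
    rw [Matrix.exists_vecMul_eq_zero_iff, ← Matrix.exists_mulVec_eq_zero_iff]
    exact ⟨v, hv, by rw [Matrix.sub_mulVec, hlv, Matrix.smul_mulVec, Matrix.one_mulVec, sub_self]⟩
  set e : Fin m → ℂ := Cc *ᵥ ((Bc * Bcᵀ) *ᵥ w) with he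
  set d : κ → ℂ := Bcᵀ *ᵥ w with hd
  have hYT : (Bc * Bcᵀ)ᵀ = Bc * Bcᵀ := by simp
  have hwe : w ᵥ* (Bc * Bcᵀ * Ccᵀ) = e := by
    rw [← Matrix.mulVec_transpose, Matrix.transpose_mul, Matrix.transpose_transpose, hYT,
      ← Matrix.mulVec_mulVec]
  have hwd : w ᵥ* Bc = d := by rw [← Matrix.mulVec_transpose]
  have hYstar : (Bc * Bcᵀ) *ᵥ star w = star ((Bc * Bcᵀ) *ᵥ w) := by
    rw [← hYc, aux_star_mulVec]
  have hw' : w ᵥ* Ac + σ • (e ᵥ* Cc) = l • w := by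
    rw [Matrix.vecMul_sub, Matrix.vecMul_add, Matrix.vecMul_smul, ← Matrix.vecMul_vecMul, hwe,
      Matrix.vecMul_smul, Matrix.vecMul_one] at hw
    exact sub_eq_zero.1 hw
  have hCe : Cc *ᵥ ((Bc * Bcᵀ) *ᵥ star w) = star e := by
    rw [hYstar, aux_star_mulVec]
  have hdot : (w ᵥ* Ac) ⬝ᵥ ((Bc * Bcᵀ) *ᵥ star w) + σ * (e ⬝ᵥ star e) = l * (d ⬝ᵥ star d) := by
    have h1 := congrArg (fun y => y ⬝ᵥ ((Bc * Bcᵀ) *ᵥ star w)) hw'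
    simp only [add_dotProduct, smul_dotProduct, smul_eq_mul] at h1
    rw [← Matrix.dotProduct_mulVec e, hCe] at h1
    rw [h1]
    congr 1
    rw [← Matrix.mulVec_mulVec, Matrix.dotProduct_mulVec, hwd]
    congr 1
    have : Bcᵀ = (Bᵀ).map Complex.ofReal := rfl
    rw [hd, this, aux_star_mulVec]
  have htau : ((w ᵥ* Ac) ⬝ᵥ ((Bc * Bcᵀ) *ᵥ star w)).re = 0 := by
    set τ := (w ᵥ* Ac) ⬝ᵥ ((Bc * Bcᵀ) *ᵥ star w) with hτ
    have h1 : τ = w ⬝ᵥ (Ac * (Bc * Bcᵀ)) *ᵥ star w := by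
      rw [hτ, ← Matrix.dotProduct_mulVec, Matrix.mulVec_mulVec]
    have h2 : star τ = w ⬝ᵥ ((Bc * Bcᵀ) * Acᵀ) *ᵥ star w := by
      have hreal : Ac * (Bc * Bcᵀ) = (A * (B * Bᵀ)).map Complex.ofReal := by
        rw [mapmul A, hYc]
      have hs : ∀ x y : Fin n → ℂ, star (x ⬝ᵥ y) = star x ⬝ᵥ star y := by
        intro x y; simp [dotProduct]
      rw [h1, hs, hreal, ← aux_star_mulVec, star_star, ← hreal]
      rw [Matrix.dotProduct_mulVec, ← Matrix.mulVec_transpose, dotProduct_comm]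
      simp [Matrix.transpose_mul, Matrix.mul_assoc]
    have h3 : τ + star τ = 0 := by
      rw [h2, h1, ← dotProduct_add, ← Matrix.add_mulVec, hLyap]; simp
    have := congrArg Complex.re h3
    simp at this
    linarith
  have hre := congrArg Complex.re hdot
  rw [aux_dot_star, aux_dot_star, Complex.add_re, htau, Complex.re_mul_ofReal, Complex.re_mul_ofReal] at hre
  have hd0 : 0 ≤ ∑ i, Complex.normSq (d i) := Finset.sum_nonneg fun i _ => Complex.normSq_nonneg _
  have he0 : 0 ≤ ∑ i, Complex.normSq (e i) := Finset.sum_nonneg fun i _ => Complex.normSq_nonneg _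
  have hesum : ∑ i, Complex.normSq (e i) = 0 := by
    by_contra hne
    have : 0 < ∑ i, Complex.normSq (e i) := lt_of_le_of_ne he0 (Ne.symm hne)
    nlinarith [mul_nonneg hl hd0, mul_neg_of_neg_of_pos hσ this]
  have hez : e = 0 := by
    ext i
    have := (Finset.sum_eq_zero_iff_of_nonneg (fun i _ => Complex.normSq_nonneg (e i))).1 hesum i
      (Finset.mem_univ i)
    simpa using this
  rw [hez] at hw'
  have hwA : w ᵥ* Ac = l • w := by simpa using hw'
  have hwN : w ᵥ* (Ac - l • 1) = 0 := by
    rw [Matrix.vecMul_sub, hwA, Matrix.vecMul_smul, Matrix.vecMul_one, sub_self]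
  have hspec : l ∈ spectrum ℂ Ac := by
    rw [spectrum.mem_iff, Matrix.isUnit_iff_isUnit_det, isUnit_iff_ne_zero, not_not,
      ← Matrix.exists_vecMul_eq_zero_iff]
    refine ⟨w, hw0, ?_⟩
    rw [Algebra.algebraMap_eq_smul_one, ← neg_sub, Matrix.vecMul_neg, hwN, neg_zero]
  have hl0 : l.re = 0 := le_antisymm (hstab l hspec) hl
  have hAz : Ac *ᵥ ((Bc * Bcᵀ) *ᵥ w) = (-l) • ((Bc * Bcᵀ) *ᵥ w) := by
    rw [Matrix.mulVec_mulVec, eq_neg_of_add_eq_zero_left hLyap, Matrix.neg_mulVec,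
      ← Matrix.mulVec_mulVec, Matrix.mulVec_transpose, hwA, Matrix.mulVec_smul, neg_smul]
  have hz := aux_detect n m A C hdet _ (-l) (by simp [hl0]) hAz hez
  have hdz : Bcᵀ *ᵥ w = 0 := by
    have hH : Bcᵀ = Bcᴴ := by ext; simp [hBc]
    rw [hH] at hz ⊢
    open scoped ComplexOrder in
    exact (Matrix.self_mul_conjTranspose_mulVec_eq_zero Bc w).1 hz
  refine hw0 (aux_semisimple n (Ac - l • 1) (hsemisimple l hspec hl0) w (fun v hv => ?_) hwN)
  refine hB2 w hdz l v hl0 ?_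
  rw [Matrix.sub_mulVec, Matrix.smul_mulVec, Matrix.one_mulVec] at hv
  exact sub_eq_zero.1 hv

/-- Vectors whose `r`-weighted block average vanishes. -/
def auxW (p n : ℕ) (r : Fin p → ℝ) : Submodule ℂ (Fin p × Fin n → ℂ) where
  carrier := {x | ∀ k, ∑ j, (r j : ℂ) * x (j, k) = 0}
  add_mem' := by
    intro a b ha hb k
    simp only [Pi.add_apply, mul_add, Finset.sum_add_distrib]
    rw [ha k, hb k, add_zero]
  zero_mem' := by intro k; simp
  smul_mem' := by
    intro c x hx k
    simp only [Pi.smul_apply, smul_eq_mul, mul_left_comm _ c, ← Finset.mul_sum]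
    rw [hx k, mul_zero]

theorem aux_kron {p n : ℕ} {R : Type*} [CommRing R] (G : Matrix (Fin p) (Fin p) R)
    (D : Matrix (Fin n) (Fin n) R)
    (x : Fin p × Fin n → R) (i : Fin p) (k : Fin n) :
    ((G ⊗ₖ D) *ᵥ x) (i, k) = ∑ j, G i j * (D *ᵥ fun l => x (j, l)) k := by
  simp [mulVec, dotProduct, Fintype.sum_prod_type, Finset.mul_sum, mul_assoc]

theorem aux_kron_one {p n : ℕ} {R : Type*} [CommRing R]
    (D : Matrix (Fin n) (Fin n) R)
    (x : Fin p × Fin n → R) (i : Fin p) (k : Fin n) :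
    (((1 : Matrix (Fin p) (Fin p) R) ⊗ₖ D) *ᵥ x) (i, k) = (D *ᵥ fun l => x (i, l)) k := by
  rw [aux_kron]; simp [Matrix.one_apply]

theorem aux_W_gamma {p n : ℕ} (Γ : Matrix (Fin p) (Fin p) ℝ) (r : Fin p → ℝ) (hr : r ᵥ* Γ = 0)
    (D : Matrix (Fin n) (Fin n) ℂ) (x : Fin p × Fin n → ℂ) :
    (Γ.map Complex.ofReal ⊗ₖ D) *ᵥ x ∈ auxW p n r := by
  intro k
  simp_rw [aux_kron, Finset.mul_sum]
  rw [Finset.sum_comm]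
  refine Finset.sum_eq_zero fun j _ => ?_
  simp_rw [← mul_assoc, ← Finset.sum_mul]
  have h := congrFun hr j
  simp only [vecMul, dotProduct, Pi.zero_apply] at h
  have h' : ∑ i, (r i : ℂ) * (Γ i j : ℂ) = 0 := by exact_mod_cast h
  simp [h']

theorem aux_W_A {p n : ℕ} (r : Fin p → ℝ)
    (D : Matrix (Fin n) (Fin n) ℂ) (x : Fin p × Fin n → ℂ) (hx : x ∈ auxW p n r) :
    ((1 : Matrix (Fin p) (Fin p) ℂ) ⊗ₖ D) *ᵥ x ∈ auxW p n r := by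
  intro k
  simp_rw [aux_kron_one, mulVec, dotProduct, Finset.mul_sum]
  rw [Finset.sum_comm]
  refine Finset.sum_eq_zero fun l _ => ?_
  simp_rw [mul_left_comm, ← Finset.mul_sum]
  rw [hx l, mul_zero]

theorem aux_main_ev {p n : ℕ} (Γ : Matrix (Fin p) (Fin p) ℝ) (hΓ : IsConnectedInterconnection Γ)
    (r : Fin p → ℝ) (hr : r ᵥ* Γ = 0) (hr1 : ∑ i, r i = 1)
    (A D : Matrix (Fin n) (Fin n) ℂ)
    (hH : ∀ (σ : ℂ), σ.re < 0 → ∀ (l : ℂ) (v : Fin n → ℂ), v ≠ 0 →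
      (A + σ • D) *ᵥ v = l • v → l.re < 0)
    (l : ℂ) (v : Fin p × Fin n → ℂ) (hv : v ∈ auxW p n r) (hv0 : v ≠ 0)
    (hlv : ((1 : Matrix (Fin p) (Fin p) ℂ) ⊗ₖ A + Γ.map Complex.ofReal ⊗ₖ D) *ᵥ v = l • v) :
    l.re < 0 := by
  set Γc := Γ.map Complex.ofReal with hΓc
  set M := (1 : Matrix (Fin p) (Fin p) ℂ) ⊗ₖ A + Γc ⊗ₖ D with hM
  set G := Γc ⊗ₖ (1 : Matrix (Fin n) (Fin n) ℂ) with hG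
  have hGM : M * G = G * M := by
    simp only [hM, hG, Matrix.add_mul, Matrix.mul_add, ← Matrix.mul_kronecker_mul, Matrix.one_mul,
      Matrix.mul_one]
  let E : Submodule ℂ (Fin p × Fin n → ℂ) :=
    auxW p n r ⊓ LinearMap.ker (M - l • 1).mulVecLin
  have hEmem : ∀ x, x ∈ E ↔ x ∈ auxW p n r ∧ M *ᵥ x = l • x := by
    intro x
    simp [E, Submodule.mem_inf, Matrix.sub_mulVec, Matrix.smul_mulVec, sub_eq_zero]
  have hGE : ∀ x ∈ E, G.mulVecLin x ∈ E := by
    intro x hx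
    rw [hEmem] at hx ⊢
    refine ⟨aux_W_gamma Γ r hr 1 x, ?_⟩
    rw [Matrix.mulVecLin_apply, Matrix.mulVec_mulVec, hGM, ← Matrix.mulVec_mulVec, hx.2,
      Matrix.mulVec_smul]
  have : Nontrivial E := ⟨⟨⟨v, (hEmem v).2 ⟨hv, hlv⟩⟩, 0, fun h => hv0 (congrArg Subtype.val h)⟩⟩
  obtain ⟨σ, hσ⟩ := Module.End.exists_eigenvalue (K := ℂ) (G.mulVecLin.restrict hGE)
  obtain ⟨⟨x, hxE⟩, hx⟩ := hσ.exists_hasEigenvector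
  have hx0 : x ≠ 0 := fun h => hx.2 (Subtype.ext h)
  have hGx : G *ᵥ x = σ • x := congrArg Subtype.val hx.apply_eq_smul
  obtain ⟨hxW, hMx⟩ := (hEmem x).1 hxE
  have hcol : ∀ k, Γc *ᵥ (fun i => x (i, k)) = σ • fun i => x (i, k) := by
    intro k
    ext i
    have := congrFun hGx (i, k)
    rw [hG, aux_kron] at this
    simp only [Matrix.one_mulVec] at this
    exact this
  have hσ : σ.re < 0 := by
    by_contra hσ
    push Not at hσ
    apply hx0
    ext ⟨i, k⟩
    by_contra hne
    obtain ⟨c, hc⟩ := aux_gamma Γ hΓ (fun i => x (i, k)) (fun h => hne (congrFun h i)) σ (hcol k) hσ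
    have h1 := hxW k
    have h2 : ∀ j, x (j, k) = c := fun j => congrFun hc j
    have h3 : ∑ j, (r j : ℂ) = 1 := by exact_mod_cast hr1
    simp_rw [h2, ← Finset.sum_mul, h3, one_mul] at h1
    exact hne (by rw [h2, h1]; rfl)
  obtain ⟨⟨i, k⟩, hik⟩ := Function.ne_iff.1 hx0
  refine hH σ hσ l (fun k => x (i, k)) (fun h => hik (congrFun h k)) ?_
  have hsplit : Γc ⊗ₖ D = ((1 : Matrix (Fin p) (Fin p) ℂ) ⊗ₖ D) * G := by
    rw [hG, ← Matrix.mul_kronecker_mul, Matrix.one_mul, Matrix.mul_one]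
  ext k
  have := congrFun hMx (i, k)
  rw [hM, Matrix.add_mulVec, hsplit, ← Matrix.mulVec_mulVec, hGx, Matrix.mulVec_smul, Pi.add_apply,
    Pi.smul_apply, aux_kron_one, aux_kron_one] at this
  rw [Matrix.add_mulVec, Matrix.smul_mulVec]
  exact this

/-- If `A` is neutrally stable and `(C, A)` is detectable, then there is a feedback law `L`
synchronizing the array `ẋᵢ = Axᵢ + LC Σⱼ γᵢⱼ(xⱼ - xᵢ)` for every connected
interconnection `Γ`: the solution `x(t) = exp(t(I_p ⊗ A + Γ ⊗ LC)) x(0)` converges to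
`(1rᵀ ⊗ exp(tA)) x(0)`, and each block synchronizes to `x̄(t) = (rᵀ ⊗ exp(tA)) x(0)`. -/
theorem neutrally_stable_detectable_synchronizable
    (n m : ℕ) (A : Matrix (Fin n) (Fin n) ℝ) (C : Matrix (Fin m) (Fin n) ℝ)
    (hstab : ∀ μ ∈ spectrum ℂ (A.map Complex.ofReal), μ.re ≤ 0)
    (hsemisimple : ∀ μ ∈ spectrum ℂ (A.map Complex.ofReal), μ.re = 0 →
      ∀ v : Fin n → ℂ,
        ((A.map Complex.ofReal - μ • 1) * (A.map Complex.ofReal - μ • 1)) *ᵥ v = 0 →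
          (A.map Complex.ofReal - μ • 1) *ᵥ v = 0)
    (hdet : ∀ x : Fin n → ℝ,
      (∀ t : ℝ, 0 ≤ t → C *ᵥ (NormedSpace.exp (t • A) *ᵥ x) = 0) →
        Tendsto (fun t : ℝ => NormedSpace.exp (t • A) *ᵥ x) atTop (nhds 0)) :
    ∃ L : Matrix (Fin n) (Fin m) ℝ,
      ∀ (p : ℕ) (Γ : Matrix (Fin p) (Fin p) ℝ), IsConnectedInterconnection Γ →
        ∀ r : Fin p → ℝ, r ᵥ* Γ = 0 → ∑ i, r i = 1 →
          ∀ x0 : Fin p × Fin n → ℝ,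
            Tendsto (fun t : ℝ =>
                NormedSpace.exp (t • ((1 : Matrix (Fin p) (Fin p) ℝ) ⊗ₖ A + Γ ⊗ₖ (L * C)))
                    *ᵥ x0
                  - (vecMulVec (fun _ => (1 : ℝ)) r ⊗ₖ NormedSpace.exp (t • A)) *ᵥ x0)
              atTop (nhds 0) ∧
            ∀ i : Fin p,
              Tendsto (fun t : ℝ => (fun k : Fin n =>
                  (NormedSpace.exp
                      (t • ((1 : Matrix (Fin p) (Fin p) ℝ) ⊗ₖ A + Γ ⊗ₖ (L * C))) *ᵥ x0) (i, k)
                    - ∑ j : Fin p, r j * (NormedSpace.exp (t • A) *ᵥ fun l => x0 (j, l)) k))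
                atTop (nhds 0) := by
  obtain ⟨L, hL⟩ := aux_hurwitz n m A C hstab hsemisimple hdet
  refine ⟨L, fun p Γ hΓ r hr hr1 x0 => ?_⟩
  set M := (1 : Matrix (Fin p) (Fin p) ℝ) ⊗ₖ A + Γ ⊗ₖ (L * C) with hM
  let E : Matrix (Fin p × Fin n) (Fin n) ℝ := Matrix.of fun ik l =>
    (1 : Matrix (Fin n) (Fin n) ℝ) ik.2 l
  have hE : ∀ (y : Fin n → ℝ) i k, (E *ᵥ y) (i, k) = y k := by
    intro y i k
    simp [E, mulVec, dotProduct, Matrix.one_apply]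
  have hME : M * E = E * A := by
    apply Matrix.ext_of_mulVec_single
    intro l
    rw [← Matrix.mulVec_mulVec, ← Matrix.mulVec_mulVec]
    ext ⟨i, k⟩
    rw [hM, Matrix.add_mulVec, Pi.add_apply, aux_kron_one, aux_kron, hE]
    simp_rw [hE, ← Finset.sum_mul, hΓ.1.2 i]
    simp
  let y : Fin n → ℝ := fun k => ∑ j, r j * x0 (j, k)
  have hexpE : ∀ t : ℝ, NormedSpace.exp (t • M) *ᵥ (E *ᵥ y) = E *ᵥ (NormedSpace.exp (t • A) *ᵥ y) :=
    fun t => aux_exp_intertwine _ _ _ (by rw [Matrix.smul_mul, hME, Matrix.mul_smul]) y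
  have hsumexp : ∀ (X : Matrix (Fin n) (Fin n) ℝ) k,
      ∑ j, r j * (X *ᵥ fun l => x0 (j, l)) k = (X *ᵥ y) k := by
    intro X k
    simp only [mulVec, dotProduct, y, Finset.mul_sum]
    rw [Finset.sum_comm]
    exact Finset.sum_congr rfl fun _ _ => Finset.sum_congr rfl fun _ _ => by ring
  have hrank : ∀ t : ℝ, (vecMulVec (fun _ => (1 : ℝ)) r ⊗ₖ NormedSpace.exp (t • A)) *ᵥ x0
      = E *ᵥ (NormedSpace.exp (t • A) *ᵥ y) := by
    intro t
    ext ⟨i, k⟩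
    rw [aux_kron, hE, ← hsumexp]
    simp [vecMulVec_apply]
  have hmain : Tendsto (fun t : ℝ => NormedSpace.exp (t • M) *ᵥ x0
      - (vecMulVec (fun _ => (1 : ℝ)) r ⊗ₖ NormedSpace.exp (t • A)) *ᵥ x0) atTop (nhds 0) := by
    simp_rw [hrank, ← hexpE, ← Matrix.mulVec_sub]
    set z : Fin p × Fin n → ℝ := x0 - E *ᵥ y with hz
    have hzW : (fun q => (z q : ℂ)) ∈ auxW p n r := by
      intro k
      have : ∑ j, r j * z (j, k) = 0 := by
        simp only [hz, Pi.sub_apply, hE, mul_sub, Finset.sum_sub_distrib, ← Finset.sum_mul, hr1,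
          one_mul]
        exact sub_self _
      beta_reduce
      exact_mod_cast this
    have hMc : M.map Complex.ofReal = (1 : Matrix (Fin p) (Fin p) ℂ) ⊗ₖ A.map Complex.ofReal
        + Γ.map Complex.ofReal ⊗ₖ (L * C).map Complex.ofReal := by
      ext ⟨i, k⟩ ⟨j, l⟩
      simp only [hM, Matrix.map_apply, Matrix.add_apply, Matrix.kroneckerMap_apply, Matrix.one_apply]
      split_ifs <;> simp
    have hc := aux_tendsto_exp (M.map Complex.ofReal) (auxW p n r)
      (fun x hx => by
        rw [hMc, Matrix.add_mulVec]
        exact (auxW p n r).add_mem (aux_W_A r _ x hx) (aux_W_gamma Γ r hr _ x))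
      (fun μ v hv hv0 h => by
        rw [hMc] at h
        exact aux_main_ev Γ hΓ r hr hr1 _ _ hL μ v hv hv0 h) _ hzW
    rw [tendsto_pi_nhds] at hc ⊢
    intro q
    have h1 := (Complex.continuous_re.tendsto _).comp (hc q)
    refine (h1.congr fun t => ?_)
    simp only [Function.comp_apply]
    rw [← aux_exp_map]
    simp [mulVec, dotProduct]
  refine ⟨hmain, fun i => ?_⟩
  rw [tendsto_pi_nhds] at hmain ⊢
  intro k
  refine (hmain (i, k)).congr fun t => ?_
  rw [Pi.sub_apply, hrank, hE, ← hsumexp]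
end
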